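/- arXiv:math/0201304 — 3 statements merged into one kernel-verified Lean document; each statement's English description precedes it below -/
import Mathlib

section
/- The following two conditions are equivalent: (i) each σ_k(b_1,…,b_n), k = 1,…,n, is invariant under circular permutations of the b_i, i.e. for every j one has σ_k(b_{1+j},…,b_{n+j}) = σ_k(b_1,…,b_n) for all k, where subscripts are read mod n; (ii) each σ_k(b_1,…,b_n) commutes with each b_i, i.e. σ_k(b_1,…,b_n)·b_i = b_i·σ_k(b_1,…,b_n) for all 1 ≤ i, k ≤ n. -/
open Finset

/-- The `k`-th elementary polynomial evaluated at elements `b_1, …, b_n` of a ring `B`: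
the sum, over all `k`-element subsets of the index set, of the product of the
corresponding elements taken in increasing order of the indices. -/
def elemPolyEval {B : Type*} [Ring B] {n : ℕ} (b : Fin n → B) (k : ℕ) : B :=
  ∑ s ∈ Finset.univ.powersetCard k, ((s.sort (· ≤ ·)).map b).prod

theorem aux_sum_split {B : Type*} [Ring B] {n : ℕ} (p : Fin (n + 1)) (k : ℕ)
    (G : Finset (Fin (n + 1)) → B) :
    ∑ s ∈ (Finset.univ : Finset (Fin (n + 1))).powersetCard (k + 1), G s =
      ∑ s ∈ (Finset.univ : Finset (Fin n)).powersetCard (k + 1), G (s.map p.succAboveEmb) +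
      ∑ s ∈ (Finset.univ : Finset (Fin n)).powersetCard k, G (insert p (s.map p.succAboveEmb)) := by
  have hp : p ∉ (Finset.univ : Finset (Fin n)).map p.succAboveEmb := by
    simp [Fin.succAbove_ne]
  have hps : ∀ s : Finset (Fin n), p ∉ s.map p.succAboveEmb := by
    intro s; simp [Fin.succAbove_ne]
  have hu : (Finset.univ : Finset (Fin (n + 1))) =
      insert p ((Finset.univ : Finset (Fin n)).map p.succAboveEmb) := by
    rw [Fin.univ_succAbove n p, Finset.cons_eq_insert]
  rw [hu, Finset.powersetCard_succ_insert hp, Finset.powersetCard_map, Finset.powersetCard_map,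
    Finset.sum_union, Finset.sum_map, Finset.sum_image, Finset.sum_map]
  · rfl
  · intro s hs t ht h
    simp only [Finset.coe_map, Set.mem_image] at hs ht
    obtain ⟨s, -, rfl⟩ := hs
    obtain ⟨t, -, rfl⟩ := ht
    have := congrArg (fun u => u.erase p) h
    simpa [Finset.erase_insert, Fin.succAbove_ne] using this
  · rw [Finset.disjoint_left]
    intro s hs ht
    simp only [Finset.mem_map, Finset.mem_image] at hs ht
    obtain ⟨s, -, rfl⟩ := hs
    obtain ⟨t, -, h⟩ := ht
    apply hps s
    change p ∈ (Finset.mapEmbedding p.succAboveEmb).toEmbedding s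
    rw [← h]
    exact Finset.mem_insert_self _ _

theorem aux_sort_map {n : ℕ} (p : Fin (n + 1)) (s : Finset (Fin n)) :
    (s.map p.succAboveEmb).sort (· ≤ ·) = (s.sort (· ≤ ·)).map p.succAbove := by
  apply List.Perm.eq_of_pairwise' (r := (· ≤ ·))
  · exact Finset.pairwise_sort _ _
  · rw [List.pairwise_map]
    exact (Finset.pairwise_sort s (· ≤ ·)).imp (fun h => (Fin.strictMono_succAbove p).monotone h)
  · rw [← Multiset.coe_eq_coe, Finset.sort_eq, ← Multiset.map_coe, Finset.sort_eq]
    rfl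

theorem aux_sort_last {n : ℕ} (s : Finset (Fin n)) :
    (insert (Fin.last n) (s.map (Fin.last n).succAboveEmb)).sort (· ≤ ·) =
      (s.map (Fin.last n).succAboveEmb).sort (· ≤ ·) ++ [Fin.last n] := by
  apply List.Perm.eq_of_pairwise' (r := (· ≤ ·))
  · exact Finset.pairwise_sort _ _
  · rw [List.pairwise_append]
    refine ⟨Finset.pairwise_sort _ _, List.pairwise_singleton _ _, ?_⟩
    intro a _ c hc
    rw [List.mem_singleton.1 hc]
    exact Fin.le_last a
  · rw [← Multiset.coe_eq_coe, Finset.sort_eq, ← Multiset.coe_add, Finset.sort_eq,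
      Finset.insert_val_of_notMem (by simp), Multiset.coe_singleton, ← Multiset.singleton_add]
    exact add_comm _ _

theorem aux_zero {B : Type*} [Ring B] {n : ℕ} (b : Fin n → B) : elemPolyEval b 0 = 1 := by
  simp [elemPolyEval]

theorem aux_big {B : Type*} [Ring B] {n : ℕ} (b : Fin n → B) (k : ℕ) (h : n < k) :
    elemPolyEval b k = 0 := by
  rw [elemPolyEval, Finset.powersetCard_eq_empty.2 (by simpa using h), Finset.sum_empty]

theorem aux_cons {B : Type*} [Ring B] {n : ℕ} (b : Fin (n + 1) → B) (k : ℕ) :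
    elemPolyEval b (k + 1) = elemPolyEval (fun i : Fin n => b i.succ) (k + 1) +
      b 0 * elemPolyEval (fun i : Fin n => b i.succ) k := by
  unfold elemPolyEval
  rw [aux_sum_split 0, Finset.mul_sum]
  congr 1
  · refine Finset.sum_congr rfl fun s _ => ?_
    rw [aux_sort_map, List.map_map]
    rfl
  · refine Finset.sum_congr rfl fun s _ => ?_
    rw [Finset.sort_insert _ (fun _ _ => Fin.zero_le _) (by simp), aux_sort_map,
      List.map_cons, List.prod_cons, List.map_map]
    rfl

theorem aux_snoc {B : Type*} [Ring B] {n : ℕ} (b : Fin (n + 1) → B) (k : ℕ) :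
    elemPolyEval b (k + 1) = elemPolyEval (fun i : Fin n => b i.castSucc) (k + 1) +
      elemPolyEval (fun i : Fin n => b i.castSucc) k * b (Fin.last n) := by
  have hf : (b ∘ (Fin.last n).succAbove) = fun i : Fin n => b i.castSucc := by
    funext i; simp
  unfold elemPolyEval
  rw [aux_sum_split (Fin.last n), Finset.sum_mul]
  congr 1
  · refine Finset.sum_congr rfl fun s _ => ?_
    rw [aux_sort_map, List.map_map, hf]
  · refine Finset.sum_congr rfl fun s _ => ?_
    rw [aux_sort_last, aux_sort_map, List.map_append, List.prod_append, List.map_map, hf]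
    simp

/-- One rotation step leaves all the elementary polynomials unchanged iff they commute with the
first element. -/
theorem aux_step {B : Type*} [Ring B] {n : ℕ} (c : Fin (n + 1) → B) :
    (∀ k, elemPolyEval (fun i => c (finRotate (n + 1) i)) k = elemPolyEval c k) ↔
      ∀ k, elemPolyEval c k * c 0 = c 0 * elemPolyEval c k := by
  have hrot : ∀ k, elemPolyEval (fun i => c (finRotate (n + 1) i)) (k + 1) =
      elemPolyEval (fun i : Fin n => c i.succ) (k + 1) +
      elemPolyEval (fun i : Fin n => c i.succ) k * c 0 := by
    intro k
    rw [aux_snoc]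
    simp
  have key : (∀ k, elemPolyEval (fun i => c (finRotate (n + 1) i)) k = elemPolyEval c k) ↔
      ∀ k, elemPolyEval (fun i : Fin n => c i.succ) k * c 0 =
        c 0 * elemPolyEval (fun i : Fin n => c i.succ) k := by
    constructor
    · intro h k
      have := h (k + 1)
      rw [hrot, aux_cons] at this
      exact add_left_cancel this
    · intro h k
      cases k with
      | zero => rw [aux_zero, aux_zero]
      | succ k => rw [hrot, aux_cons, h]
  rw [key]
  constructor
  · intro h k
    cases k with
    | zero => rw [aux_zero, one_mul, mul_one]
    | succ k => rw [aux_cons, add_mul, mul_add, h, mul_assoc, h]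
  · intro h k
    induction k with
    | zero => rw [aux_zero, one_mul, mul_one]
    | succ k ih =>
      have := h (k + 1)
      rw [aux_cons, add_mul, mul_add, mul_assoc, ih] at this
      exact add_right_cancel this

theorem aux_orbit {n : ℕ} (i : Fin (n + 1)) : ∃ j : ℕ, (⇑(finRotate (n + 1)))^[j] 0 = i := by
  induction i using Fin.induction with
  | zero => exact ⟨0, rfl⟩
  | succ i ih =>
    obtain ⟨j, hj⟩ := ih
    refine ⟨j + 1, ?_⟩
    rw [Function.iterate_succ_apply', hj, finRotate_apply]
    simp

/-- For elements `b_1, …, b_n` of a ring `B` (with `n ≥ 3`), the following are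
equivalent: (i) each `σ_k(b_1,…,b_n)`, `1 ≤ k ≤ n`, is invariant under circular
permutations of the `b_i` (shifting the subscripts mod `n`); (ii) each
`σ_k(b_1,…,b_n)` commutes with each `b_i`. -/
theorem elemPolyEval_circular_invariant_iff_commutes
    {B : Type*} [Ring B] (n : ℕ) (hn : 3 ≤ n) (b : Fin n → B) :
    (∀ (j k : ℕ), 1 ≤ k → k ≤ n →
        elemPolyEval (fun i => b ((⇑(finRotate n))^[j] i)) k = elemPolyEval b k) ↔
    (∀ (i : Fin n) (k : ℕ), 1 ≤ k → k ≤ n →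
        elemPolyEval b k * b i = b i * elemPolyEval b k) := by
  obtain ⟨m, rfl⟩ : ∃ m, n = m + 1 := ⟨n - 1, by omega⟩
  have ext_all : ∀ P : ℕ → Prop, P 0 → (∀ k, m + 1 < k → P k) →
      (∀ k, 1 ≤ k → k ≤ m + 1 → P k) → ∀ k, P k := by
    intro P h0 hbig h k
    rcases Nat.eq_zero_or_pos k with rfl | hk
    · exact h0
    · rcases Nat.lt_or_ge (m + 1) k with h1 | h1
      · exact hbig k h1
      · exact h k hk h1
  have hshift : ∀ j : ℕ, (fun i => b ((⇑(finRotate (m + 1)))^[j + 1] i)) =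
      fun i => (fun i => b ((⇑(finRotate (m + 1)))^[j] i)) (finRotate (m + 1) i) := by
    intro j; rfl
  constructor
  · intro h i
    have h' : ∀ j k, elemPolyEval (fun i => b ((⇑(finRotate (m + 1)))^[j] i)) k =
        elemPolyEval b k := fun j => ext_all _ (by rw [aux_zero, aux_zero])
      (fun k hk => by rw [aux_big _ _ hk, aux_big _ _ hk]) (h j)
    obtain ⟨j, rfl⟩ := aux_orbit i
    have := (aux_step (fun i => b ((⇑(finRotate (m + 1)))^[j] i))).1 (fun k => by
      rw [← hshift, h', h'])
    intro k _ _
    have h2 := this k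
    rwa [h'] at h2
  · intro h
    have h' : ∀ i k, elemPolyEval b k * b i = b i * elemPolyEval b k := fun i =>
      ext_all _ (by rw [aux_zero, one_mul, mul_one])
        (fun k hk => by rw [aux_big _ _ hk, zero_mul, mul_zero]) (h i)
    have main : ∀ j k, elemPolyEval (fun i => b ((⇑(finRotate (m + 1)))^[j] i)) k =
        elemPolyEval b k := by
      intro j
      induction j with
      | zero => intro k; rfl
      | succ j ih =>
        intro k
        rw [hshift, (aux_step (fun i => b ((⇑(finRotate (m + 1)))^[j] i))).2
          (fun k => by rw [ih, h']), ih]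
    intro j k _ _
    exact main j k
end

section
/- Every G-invariant element p of R′ can be written in the form p = z_0 + z_1c + z_2c², where z_0, z_1, z_2 lie in the K-subalgebra Z_0 of R′ generated by σ_1, σ_2, σ_3, c³, and d (a central subalgebra of R′). -/
open Finset

/-- The free algebra `P = K⟨x_1, x_2, x_3⟩` (generators indexed by `Fin 3`). -/
noncomputable abbrev P3 (K : Type*) [Field K] := FreeAlgebra K (Fin 3)

/-- The generators `x_1, x_2, x_3` of `P` (zero-based: `x3 K 0 = x_1`, etc.). -/
noncomputable def x3 (K : Type*) [Field K] (i : Fin 3) : P3 K := FreeAlgebra.ι K i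

/-- The elementary polynomials `σ_1 = x_1+x_2+x_3`, `σ_2 = x_1x_2+x_1x_3+x_2x_3`,
`σ_3 = x_1x_2x_3` (zero-based indexing: `sig3 K 0 = σ_1`, etc.). -/
noncomputable def sig3 (K : Type*) [Field K] : Fin 3 → P3 K :=
  ![x3 K 0 + x3 K 1 + x3 K 2,
    x3 K 0 * x3 K 1 + x3 K 0 * x3 K 2 + x3 K 1 * x3 K 2,
    x3 K 0 * x3 K 1 * x3 K 2]

/-- The relation identifying `x_i * σ_k` with `σ_k * x_i`; the quotient
`R′ = P/I` by the two-sided ideal `I` generated by the commutators `[x_i, σ_k]`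
is `RingQuot` of this relation. -/
noncomputable def rel3 (K : Type*) [Field K] : P3 K → P3 K → Prop :=
  fun a b => ∃ i k : Fin 3, a = x3 K i * sig3 K k ∧ b = sig3 K k * x3 K i

/-- The quotient ring `R′ = P/I`. -/
noncomputable abbrev R3 (K : Type*) [Field K] := RingQuot (rel3 K)

/-- The quotient map `P → R′`. -/
noncomputable def mk3 (K : Type*) [Field K] : P3 K →ₐ[K] R3 K :=
  RingQuot.mkAlgHom K (rel3 K)

/-- The image in `R′` of the generator `x_i`. -/
noncomputable def X3 (K : Type*) [Field K] (i : Fin 3) : R3 K := mk3 K (x3 K i)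

/-- The image in `R′` of `σ_k`. -/
noncomputable def S3 (K : Type*) [Field K] (k : Fin 3) : R3 K := mk3 K (sig3 K k)

/-- The element `c = [x_1, x_2]` of `R′` (in `R′` one has
`[x_1,x_2] = [x_2,x_3] = [x_3,x_1]`, and `c` denotes this common value). -/
noncomputable def c3 (K : Type*) [Field K] : R3 K :=
  X3 K 0 * X3 K 1 - X3 K 1 * X3 K 0

/-- The orbit polynomial `d = x_1x_2x_1 + x_2x_3x_2 + x_3x_1x_3` in `R′`. -/
noncomputable def d3 (K : Type*) [Field K] : R3 K :=
  X3 K 0 * X3 K 1 * X3 K 0 + X3 K 1 * X3 K 2 * X3 K 1 + X3 K 2 * X3 K 0 * X3 K 2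

/-- The orbit polynomial `e = x_1x_3x_1 + x_2x_1x_2 + x_3x_2x_3` in `R′`. -/
noncomputable def e3 (K : Type*) [Field K] : R3 K :=
  X3 K 0 * X3 K 2 * X3 K 0 + X3 K 1 * X3 K 0 * X3 K 1 + X3 K 2 * X3 K 1 * X3 K 2

/-- The generator of the group `G` of circular permutations, acting as the
`K`-algebra automorphism of `P` sending `x_i` to `x_{i+1}` (mod `3`). -/
noncomputable def rot3 (K : Type*) [Field K] : P3 K →ₐ[K] P3 K :=
  FreeAlgebra.lift K fun i => FreeAlgebra.ι K (finRotate 3 i)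

/-- The defining commutation relations in degrees two and three. -/
structure Rels3 {R : Type*} [Ring R] (x y z : R) : Prop where
  hx : x * (x + y + z) = (x + y + z) * x
  hy : y * (x + y + z) = (x + y + z) * y
  hz : z * (x + y + z) = (x + y + z) * z
  tx : x * (x*y + x*z + y*z) = (x*y + x*z + y*z) * x
  ty : y * (x*y + x*z + y*z) = (x*y + x*z + y*z) * y
  tz : z * (x*y + x*z + y*z) = (x*y + x*z + y*z) * z

lemma aux_xy {R : Type*} [Ring R] {x y z : R}  :
    x*y = ((x*y+x*z+y*z)) * 1
      + (-(x+y+z)) * z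
      + (1) * (z*z) := by
  noncomm_ring

lemma aux_xz {R : Type*} [Ring R] {x y z : R} (h : Rels3 x y z) :
    x*z = (-(x*y+x*z+y*z)) * 1
      + ((x+y+z)) * x
      + ((x+y+z)) * z
      + (-1) * (x*x)
      + (-1) * (z*z) := by
  linear_combination (norm := noncomm_ring) h.hx

lemma aux_yx {R : Type*} [Ring R] {x y z : R}  :
    y*x = (-(x*y-y*x) + (x*y+x*z+y*z)) * 1
      + (-(x+y+z)) * z
      + (1) * (z*z) := by
  noncomm_ring

lemma aux_yz {R : Type*} [Ring R] {x y z : R} (h : Rels3 x y z) :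
    y*z = ((x*y+x*z+y*z)) * 1
      + (-(x+y+z)) * x
      + (1) * (x*x) := by
  linear_combination (norm := noncomm_ring) -h.hx

lemma aux_zx {R : Type*} [Ring R] {x y z : R}  :
    z*x = ((x*y-y*x) - (x*y+x*z+y*z)) * 1
      + ((x+y+z)) * x
      + ((x+y+z)) * z
      + (-1) * (x*x)
      + (-1) * (z*z) := by
  noncomm_ring

lemma aux_zy {R : Type*} [Ring R] {x y z : R}  :
    z*y = (-(x*y+x*z+y*z)) * 1
      + ((x+y+z)) * y
      + ((x+y+z)) * z
      + (-1) * (y*y)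
      + (-1) * (z*z) := by
  noncomm_ring

lemma aux_xxx {R : Type*} [Ring R] {x y z : R} (h : Rels3 x y z) :
    x*x*x = ((x*y*z)) * 1
      + (-(x*y+x*z+y*z)) * x
      + ((x+y+z)) * (x*x) := by
  linear_combination (norm := noncomm_ring) x*h.hx + h.hx*x - h.tx

lemma aux_xxy {R : Type*} [Ring R] {x y z : R} (h : Rels3 x y z) :
    3 * (x*x*y) = (-2*(x+y+z)*(x+y+z)*(x+y+z) + 2*(x+y+z)*(x*y+x*z+y*z) - (x+y+z)*(x*y-y*x) + (x*y*x+y*z*y+z*x*z)) * 1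
      + ((x+y+z)*(x+y+z) + (x*y+x*z+y*z) + (x*y-y*x)) * x
      + (2*(x+y+z)*(x+y+z) - (x*y+x*z+y*z) + 2*(x*y-y*x)) * y
      + ((x+y+z)) * (x*x)
      + (2*(x+y+z)) * (z*z) := by
  linear_combination (norm := noncomm_ring) -2*x*h.hx - y*h.hx - z*h.hx - 2*x*h.hy + h.hy*x - y*h.hy + 2*h.tx + h.ty

lemma aux_xxz {R : Type*} [Ring R] {x y z : R} (h : Rels3 x y z) :
    3 * (x*x*z) = (2*(x+y+z)*(x+y+z)*(x+y+z) - 2*(x+y+z)*(x*y+x*z+y*z) + (x+y+z)*(x*y-y*x) - 3*(x*y*z) - (x*y*x+y*z*y+z*x*z)) * 1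
      + (-(x+y+z)*(x+y+z) + 2*(x*y+x*z+y*z) - (x*y-y*x)) * x
      + (-2*(x+y+z)*(x+y+z) + (x*y+x*z+y*z) - 2*(x*y-y*x)) * y
      + (-(x+y+z)) * (x*x)
      + (-2*(x+y+z)) * (z*z) := by
  linear_combination (norm := noncomm_ring) 2*x*h.hx + y*h.hx + z*h.hx + 2*x*h.hy - h.hy*x + y*h.hy + h.tx - h.ty

lemma aux_yyx {R : Type*} [Ring R] {x y z : R} (h : Rels3 x y z) :
    3 * (y*y*x) = (-(x+y+z)*(x+y+z)*(x+y+z) + (x+y+z)*(x*y+x*z+y*z) - 2*(x+y+z)*(x*y-y*x) - 3*(x*y*z) - (x*y*x+y*z*y+z*x*z)) * 1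
      + (2*(x+y+z)*(x+y+z) - (x*y+x*z+y*z) + 2*(x*y-y*x)) * x
      + ((x+y+z)*(x+y+z) + (x*y+x*z+y*z) + (x*y-y*x)) * y
      + (-(x+y+z)) * (x*x)
      + ((x+y+z)) * (z*z) := by
  linear_combination (norm := noncomm_ring) -4*x*h.hx - 2*y*h.hx + z*h.hx - x*h.hy + 2*h.hy*x - 2*y*h.hy + 4*h.tx + 2*h.ty

lemma aux_yyy {R : Type*} [Ring R] {x y z : R} (h : Rels3 x y z) :
    y*y*y = ((x*y*z)) * 1
      + (-(x*y+x*z+y*z)) * y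
      + ((x+y+z)) * (y*y) := by
  linear_combination (norm := noncomm_ring) x*h.hx + y*h.hx + y*h.hy + h.hy*y - h.tx - h.ty

lemma aux_yyz {R : Type*} [Ring R] {x y z : R} (h : Rels3 x y z) :
    3 * (y*y*z) = ((x+y+z)*(x+y+z)*(x+y+z) - (x+y+z)*(x*y+x*z+y*z) + 2*(x+y+z)*(x*y-y*x) + (x*y*x+y*z*y+z*x*z)) * 1
      + (-2*(x+y+z)*(x+y+z) + (x*y+x*z+y*z) - 2*(x*y-y*x)) * x
      + (-(x+y+z)*(x+y+z) + 2*(x*y+x*z+y*z) - (x*y-y*x)) * y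
      + ((x+y+z)) * (x*x)
      + (-(x+y+z)) * (z*z) := by
  linear_combination (norm := noncomm_ring) x*h.hx - y*h.hx - z*h.hx + x*h.hy - 2*h.hy*x + 2*y*h.hy - h.tx + h.ty

lemma aux_zzx {R : Type*} [Ring R] {x y z : R} (h : Rels3 x y z) :
    3 * (z*z*x) = ((x+y+z)*(x+y+z)*(x+y+z) - (x+y+z)*(x*y+x*z+y*z) + 2*(x+y+z)*(x*y-y*x) + (x*y*x+y*z*y+z*x*z)) * 1
      + ((x+y+z)*(x+y+z) - 2*(x*y+x*z+y*z) + (x*y-y*x)) * x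
      + (-(x+y+z)*(x+y+z) - (x*y+x*z+y*z) - (x*y-y*x)) * y
      + (-2*(x+y+z)) * (x*x)
      + (-(x+y+z)) * (z*z) := by
  linear_combination (norm := noncomm_ring) x*h.hx + 2*y*h.hx - z*h.hx + x*h.hy + h.hy*x + 2*y*h.hy - h.tx - 2*h.ty

lemma aux_zzy {R : Type*} [Ring R] {x y z : R} (h : Rels3 x y z) :
    3 * (z*z*y) = (2*(x+y+z)*(x+y+z)*(x+y+z) - 2*(x+y+z)*(x*y+x*z+y*z) + (x+y+z)*(x*y-y*x) - 3*(x*y*z) - (x*y*x+y*z*y+z*x*z)) * 1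
      + (-(x+y+z)*(x+y+z) - (x*y+x*z+y*z) - (x*y-y*x)) * x
      + ((x+y+z)*(x+y+z) - 2*(x*y+x*z+y*z) + (x*y-y*x)) * y
      + (-(x+y+z)) * (x*x)
      + (-3*(x+y+z)) * (y*y)
      + (-2*(x+y+z)) * (z*z) := by
  linear_combination (norm := noncomm_ring) -x*h.hx - 2*y*h.hx + 3*h.hx*y + z*h.hx + 2*x*h.hy - h.hy*x - 2*y*h.hy + h.tx + 2*h.ty

lemma aux_zzz {R : Type*} [Ring R] {x y z : R} (h : Rels3 x y z) :
    z*z*z = (-(x+y+z)*(x*y+x*z+y*z) + (x*y*z)) * 1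
      + ((x*y+x*z+y*z)) * x
      + ((x*y+x*z+y*z)) * y
      + ((x+y+z)) * (z*z) := by
  linear_combination (norm := noncomm_ring) x*h.hx + y*h.hx - h.hx*y - h.hx*z + y*h.hy - h.hy*z

lemma aux_cx {R : Type*} [Ring R] {x y z : R} (h : Rels3 x y z) :
    (x*y-y*x)*x = z*(x*y-y*x) := by
  linear_combination (norm := noncomm_ring) -y*h.hx + h.hx*y - h.hy*x - y*h.hy + h.ty

lemma aux_cy {R : Type*} [Ring R] {x y z : R} (h : Rels3 x y z) :
    (x*y-y*x)*y = x*(x*y-y*x) := by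
  linear_combination (norm := noncomm_ring) x*h.hx + y*h.hx + x*h.hy + y*h.hy - h.tx - h.ty

lemma aux_cz {R : Type*} [Ring R] {x y z : R} (h : Rels3 x y z) :
    (x*y-y*x)*z = y*(x*y-y*x) := by
  linear_combination (norm := noncomm_ring) -x*h.hx - y*h.hx + h.tx

lemma aux_rot {R : Type*} [Ring R] {x y z : R} (h : Rels3 x y z) :
    x*y*z = y*z*x := by
  linear_combination (norm := noncomm_ring) -x*h.hx + h.tx

lemma aux_closed {K R : Type*} [Field K] [CharZero K] [Ring R] [Algebra K R] {x y z : R} (h : Rels3 x y z)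
    (A : Subalgebra K R) (M : AddSubmonoid R) (hM : ∀ a ∈ A, ∀ m ∈ M, a * m ∈ M)
    (as : x+y+z ∈ A) (at' : x*y+x*z+y*z ∈ A) (ac : x*y-y*x ∈ A) (ae : x*y*z ∈ A)
    (ad : x*y*x+y*z*y+z*x*z ∈ A)
    (m1 : 1 ∈ M) (mx : x ∈ M) (my : y ∈ M) (mz : z ∈ M) (mxx : x*x ∈ M) (myy : y*y ∈ M) (mzz : z*z ∈ M) :
    (x*y ∈ M ∧ x*z ∈ M ∧ y*x ∈ M ∧ y*z ∈ M ∧ z*x ∈ M ∧ z*y ∈ M) ∧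
    (x*x*x ∈ M ∧ x*x*y ∈ M ∧ x*x*z ∈ M) ∧ (y*y*x ∈ M ∧ y*y*y ∈ M ∧ y*y*z ∈ M) ∧
    (z*z*x ∈ M ∧ z*z*y ∈ M ∧ z*z*z ∈ M) := by
  have h3 : ∀ m : R, 3 * m ∈ M → m ∈ M := by
    intro m hm
    have h1 : algebraMap K R 3⁻¹ * (3 * m) = m := by
      rw [← mul_assoc, ← map_ofNat (algebraMap K R) 3, ← map_mul, inv_mul_cancel₀ three_ne_zero, map_one, one_mul]
    rw [← h1]
    exact hM _ (A.algebraMap_mem _) _ hm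
  have n2 : (2 : R) ∈ A := ofNat_mem A 2
  have n3 : (3 : R) ∈ A := ofNat_mem A 3
  have n1 : (1 : R) ∈ A := one_mem A
  refine ⟨⟨?_, ?_, ?_, ?_, ?_, ?_⟩, ⟨?_, ?_, ?_⟩, ⟨?_, ?_, ?_⟩, ⟨?_, ?_, ?_⟩⟩
  · rw [aux_xy]
    refine (add_mem (add_mem (hM _ ?_ _ m1) (hM _ ?_ _ mz)) (hM _ ?_ _ mzz)) <;>
      repeat' first | assumption | apply add_mem | apply sub_mem | apply neg_mem | apply mul_mem
  · rw [aux_xz h]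
    refine (add_mem (add_mem (add_mem (add_mem (hM _ ?_ _ m1) (hM _ ?_ _ mx)) (hM _ ?_ _ mz)) (hM _ ?_ _ mxx)) (hM _ ?_ _ mzz)) <;>
      repeat' first | assumption | apply add_mem | apply sub_mem | apply neg_mem | apply mul_mem
  · rw [aux_yx]
    refine (add_mem (add_mem (hM _ ?_ _ m1) (hM _ ?_ _ mz)) (hM _ ?_ _ mzz)) <;>
      repeat' first | assumption | apply add_mem | apply sub_mem | apply neg_mem | apply mul_mem
  · rw [aux_yz h]
    refine (add_mem (add_mem (hM _ ?_ _ m1) (hM _ ?_ _ mx)) (hM _ ?_ _ mxx)) <;>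
      repeat' first | assumption | apply add_mem | apply sub_mem | apply neg_mem | apply mul_mem
  · rw [aux_zx]
    refine (add_mem (add_mem (add_mem (add_mem (hM _ ?_ _ m1) (hM _ ?_ _ mx)) (hM _ ?_ _ mz)) (hM _ ?_ _ mxx)) (hM _ ?_ _ mzz)) <;>
      repeat' first | assumption | apply add_mem | apply sub_mem | apply neg_mem | apply mul_mem
  · rw [aux_zy]
    refine (add_mem (add_mem (add_mem (add_mem (hM _ ?_ _ m1) (hM _ ?_ _ my)) (hM _ ?_ _ mz)) (hM _ ?_ _ myy)) (hM _ ?_ _ mzz)) <;>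
      repeat' first | assumption | apply add_mem | apply sub_mem | apply neg_mem | apply mul_mem
  · rw [aux_xxx h]
    refine (add_mem (add_mem (hM _ ?_ _ m1) (hM _ ?_ _ mx)) (hM _ ?_ _ mxx)) <;>
      repeat' first | assumption | apply add_mem | apply sub_mem | apply neg_mem | apply mul_mem
  · apply h3; rw [aux_xxy h]
    refine (add_mem (add_mem (add_mem (add_mem (hM _ ?_ _ m1) (hM _ ?_ _ mx)) (hM _ ?_ _ my)) (hM _ ?_ _ mxx)) (hM _ ?_ _ mzz)) <;>
      repeat' first | assumption | apply add_mem | apply sub_mem | apply neg_mem | apply mul_mem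
  · apply h3; rw [aux_xxz h]
    refine (add_mem (add_mem (add_mem (add_mem (hM _ ?_ _ m1) (hM _ ?_ _ mx)) (hM _ ?_ _ my)) (hM _ ?_ _ mxx)) (hM _ ?_ _ mzz)) <;>
      repeat' first | assumption | apply add_mem | apply sub_mem | apply neg_mem | apply mul_mem
  · apply h3; rw [aux_yyx h]
    refine (add_mem (add_mem (add_mem (add_mem (hM _ ?_ _ m1) (hM _ ?_ _ mx)) (hM _ ?_ _ my)) (hM _ ?_ _ mxx)) (hM _ ?_ _ mzz)) <;>
      repeat' first | assumption | apply add_mem | apply sub_mem | apply neg_mem | apply mul_mem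
  · rw [aux_yyy h]
    refine (add_mem (add_mem (hM _ ?_ _ m1) (hM _ ?_ _ my)) (hM _ ?_ _ myy)) <;>
      repeat' first | assumption | apply add_mem | apply sub_mem | apply neg_mem | apply mul_mem
  · apply h3; rw [aux_yyz h]
    refine (add_mem (add_mem (add_mem (add_mem (hM _ ?_ _ m1) (hM _ ?_ _ mx)) (hM _ ?_ _ my)) (hM _ ?_ _ mxx)) (hM _ ?_ _ mzz)) <;>
      repeat' first | assumption | apply add_mem | apply sub_mem | apply neg_mem | apply mul_mem
  · apply h3; rw [aux_zzx h]
    refine (add_mem (add_mem (add_mem (add_mem (hM _ ?_ _ m1) (hM _ ?_ _ mx)) (hM _ ?_ _ my)) (hM _ ?_ _ mxx)) (hM _ ?_ _ mzz)) <;>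
      repeat' first | assumption | apply add_mem | apply sub_mem | apply neg_mem | apply mul_mem
  · apply h3; rw [aux_zzy h]
    refine (add_mem (add_mem (add_mem (add_mem (add_mem (hM _ ?_ _ m1) (hM _ ?_ _ mx)) (hM _ ?_ _ my)) (hM _ ?_ _ mxx)) (hM _ ?_ _ myy)) (hM _ ?_ _ mzz)) <;>
      repeat' first | assumption | apply add_mem | apply sub_mem | apply neg_mem | apply mul_mem
  · rw [aux_zzz h]
    refine (add_mem (add_mem (add_mem (hM _ ?_ _ m1) (hM _ ?_ _ mx)) (hM _ ?_ _ my)) (hM _ ?_ _ mzz)) <;>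
      repeat' first | assumption | apply add_mem | apply sub_mem | apply neg_mem | apply mul_mem

lemma S3_comm (K : Type*) [Field K] (i k : Fin 3) : X3 K i * S3 K k = S3 K k * X3 K i := by
  unfold X3 S3 mk3
  rw [← map_mul, ← map_mul]
  exact RingQuot.mkAlgHom_rel K ⟨i, k, rfl, rfl⟩

lemma S3_0 (K : Type*) [Field K] : S3 K 0 = X3 K 0 + X3 K 1 + X3 K 2 := by
  simp [S3, X3, sig3]

lemma S3_1 (K : Type*) [Field K] :
    S3 K 1 = X3 K 0 * X3 K 1 + X3 K 0 * X3 K 2 + X3 K 1 * X3 K 2 := by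
  simp [S3, X3, sig3]

lemma S3_2 (K : Type*) [Field K] : S3 K 2 = X3 K 0 * X3 K 1 * X3 K 2 := by
  simp [S3, X3, sig3]

lemma rels3 (K : Type*) [Field K] : Rels3 (X3 K 0) (X3 K 1) (X3 K 2) := by
  constructor
  all_goals first
    | (rw [← S3_0]; exact S3_comm K _ _)
    | (rw [← S3_1]; exact S3_comm K _ _)

/-- The rotation at the level of the quotient, before descending. -/
noncomputable def rotPre (K : Type*) [Field K] : P3 K →ₐ[K] R3 K := (mk3 K).comp (rot3 K)

lemma rotPre_x (K : Type*) [Field K] (i : Fin 3) : rotPre K (x3 K i) = X3 K (finRotate 3 i) := by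
  simp [rotPre, rot3, x3, X3]

lemma rotPre_sig (K : Type*) [Field K] (k : Fin 3) : rotPre K (sig3 K k) = S3 K k := by
  have h := rels3 K
  have r0 : finRotate 3 0 = 1 := by decide
  have r1 : finRotate 3 1 = 2 := by decide
  have r2 : finRotate 3 2 = 0 := by decide
  fin_cases k
  · simp only [Fin.zero_eta]
    rw [S3_0]
    simp only [sig3, Matrix.cons_val_zero, map_add, rotPre_x, r0, r1, r2]
    abel
  · simp only [Fin.mk_one]
    rw [S3_1]
    simp only [sig3, Matrix.cons_val_one, Matrix.cons_val_zero, map_add, map_mul, rotPre_x, r0, r1, r2]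
    linear_combination (norm := noncomm_ring) -h.hx
  · simp only [Fin.reduceFinMk]
    rw [S3_2]
    simp only [sig3, Matrix.cons_val, map_mul, rotPre_x, r0, r1, r2]
    exact (aux_rot h).symm

/-- The rotation on `R′`. -/
noncomputable def rotR (K : Type*) [Field K] : R3 K →ₐ[K] R3 K :=
  RingQuot.liftAlgHom K ⟨rotPre K, by
    rintro a b ⟨i, k, rfl, rfl⟩
    rw [map_mul, map_mul, rotPre_sig, rotPre_x, S3_comm]⟩

lemma rotR_mk (K : Type*) [Field K] (q : P3 K) : rotR K (mk3 K q) = mk3 K (rot3 K q) := by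
  unfold rotR mk3
  rw [RingQuot.liftAlgHom_mkAlgHom_apply]
  rfl

lemma rotR_X (K : Type*) [Field K] (i : Fin 3) : rotR K (X3 K i) = X3 K (finRotate 3 i) := by
  rw [X3, rotR_mk, ← rotPre_x]; rfl

lemma rotR_X0 (K : Type*) [Field K] : rotR K (X3 K 0) = X3 K 1 := rotR_X K 0
lemma rotR_X1 (K : Type*) [Field K] : rotR K (X3 K 1) = X3 K 2 := rotR_X K 1
lemma rotR_X2 (K : Type*) [Field K] : rotR K (X3 K 2) = X3 K 0 := rotR_X K 2

lemma rotR_S (K : Type*) [Field K] (k : Fin 3) : rotR K (S3 K k) = S3 K k := by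
  rw [S3, rotR_mk]; exact rotPre_sig K k

/-- The subalgebra generated by the `σ_k`, `c` and `d`. -/
noncomputable def A3 (K : Type*) [Field K] : Subalgebra K (R3 K) :=
  Algebra.adjoin K {S3 K 0, S3 K 1, S3 K 2, c3 K, d3 K}

lemma rotR_A (K : Type*) [Field K] {a : R3 K} (ha : a ∈ A3 K) : rotR K a = a := by
  have h := rels3 K
  have hle : A3 K ≤ AlgHom.equalizer (rotR K) (AlgHom.id K (R3 K)) := by
    refine Algebra.adjoin_le ?_
    intro y hy
    simp only [Set.mem_insert_iff, Set.mem_singleton_iff] at hy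
    rw [SetLike.mem_coe, AlgHom.mem_equalizer, AlgHom.id_apply]
    rcases hy with rfl | rfl | rfl | rfl | rfl
    · exact rotR_S K 0
    · exact rotR_S K 1
    · exact rotR_S K 2
    · simp only [c3, map_sub, map_mul, rotR_X0, rotR_X1]
      linear_combination (norm := noncomm_ring) h.hy
    · simp only [d3, map_add, map_mul, rotR_X0, rotR_X1, rotR_X2]
      abel
  exact hle ha

lemma A3_form (K : Type*) [Field K] {a : R3 K} (ha : a ∈ A3 K) :
    ∃ z0 z1 z2 : R3 K,
      z0 ∈ Algebra.adjoin K {S3 K 0, S3 K 1, S3 K 2, (c3 K) ^ 3, d3 K} ∧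
      z1 ∈ Algebra.adjoin K {S3 K 0, S3 K 1, S3 K 2, (c3 K) ^ 3, d3 K} ∧
      z2 ∈ Algebra.adjoin K {S3 K 0, S3 K 1, S3 K 2, (c3 K) ^ 3, d3 K} ∧
      a = z0 + z1 * c3 K + z2 * (c3 K) ^ 2 := by
  have h := rels3 K
  have hcS : ∀ k, c3 K * S3 K k = S3 K k * c3 K := by
    intro k
    rw [c3, sub_mul, mul_sub, mul_assoc, S3_comm, ← mul_assoc, S3_comm, mul_assoc (X3 K 1), S3_comm K 0,
      ← mul_assoc (X3 K 1), S3_comm K 1]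
    simp only [mul_assoc]
  have c0 : c3 K * X3 K 0 = X3 K 2 * c3 K := aux_cx h
  have c1 : c3 K * X3 K 1 = X3 K 0 * c3 K := aux_cy h
  have c2 : c3 K * X3 K 2 = X3 K 1 * c3 K := aux_cz h
  have hcd : c3 K * d3 K = d3 K * c3 K := by
    have e : ∀ {u v w u' v' w' : R3 K}, c3 K * u = u' * c3 K → c3 K * v = v' * c3 K →
        c3 K * w = w' * c3 K → c3 K * (u * v * w) = u' * v' * w' * c3 K := by
      intro u v w u' v' w' h1 h2 h3
      rw [← mul_assoc, ← mul_assoc, h1, mul_assoc u', h2, mul_assoc, mul_assoc v', h3]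
      simp only [mul_assoc]
    rw [d3, mul_add, mul_add, e c0 c1 c0, e c1 c2 c1, e c2 c0 c2]
    noncomm_ring
  set Z := Algebra.adjoin K {S3 K 0, S3 K 1, S3 K 2, (c3 K) ^ 3, d3 K} with hZ
  have zc : ∀ w ∈ Z, c3 K * w = w * c3 K := by
    have hle : Z ≤ Subalgebra.centralizer K {c3 K} := by
      refine Algebra.adjoin_le ?_
      intro y hy
      simp only [Set.mem_insert_iff, Set.mem_singleton_iff] at hy
      rw [SetLike.mem_coe, Subalgebra.mem_centralizer_iff]
      rintro g rfl
      rcases hy with rfl | rfl | rfl | rfl | rfl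
      · exact hcS 0
      · exact hcS 1
      · exact hcS 2
      · exact ((Commute.refl _).pow_right 3).eq
      · exact hcd
    intro w hw
    exact (Subalgebra.mem_centralizer_iff K).1 (hle hw) _ rfl
  have c3Z : c3 K ^ 3 ∈ Z := Algebra.subset_adjoin (by simp)
  have base : ∀ w ∈ Z, ∃ z0 z1 z2 : R3 K, z0 ∈ Z ∧ z1 ∈ Z ∧ z2 ∈ Z ∧
      w = z0 + z1 * c3 K + z2 * (c3 K) ^ 2 := fun w hw =>
    ⟨w, 0, 0, hw, zero_mem _, zero_mem _, by simp⟩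
  refine Algebra.adjoin_induction ?_ ?_ ?_ ?_ ha
  · intro y hy
    simp only [Set.mem_insert_iff, Set.mem_singleton_iff] at hy
    rcases hy with rfl | rfl | rfl | rfl | rfl
    · exact base _ (Algebra.subset_adjoin (by simp))
    · exact base _ (Algebra.subset_adjoin (by simp))
    · exact base _ (Algebra.subset_adjoin (by simp))
    · exact ⟨0, 1, 0, zero_mem _, one_mem _, zero_mem _, by simp⟩
    · exact base _ (Algebra.subset_adjoin (by simp))
  · intro r
    exact base _ (Z.algebraMap_mem r)
  · rintro x y - - ⟨a0, a1, a2, ha0, ha1, ha2, rfl⟩ ⟨b0, b1, b2, hb0, hb1, hb2, rfl⟩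
    refine ⟨a0 + b0, a1 + b1, a2 + b2, add_mem ha0 hb0, add_mem ha1 hb1, add_mem ha2 hb2, ?_⟩
    noncomm_ring
  · rintro x y - - ⟨a0, a1, a2, ha0, ha1, ha2, rfl⟩ ⟨b0, b1, b2, hb0, hb1, hb2, rfl⟩
    refine ⟨a0 * b0 + (a1 * b2 + a2 * b1) * c3 K ^ 3,
      a0 * b1 + a1 * b0 + a2 * b2 * c3 K ^ 3, a0 * b2 + a1 * b1 + a2 * b0, ?_, ?_, ?_, ?_⟩
    · exact add_mem (mul_mem ha0 hb0) (mul_mem (add_mem (mul_mem ha1 hb2) (mul_mem ha2 hb1)) c3Z)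
    · exact add_mem (add_mem (mul_mem ha0 hb1) (mul_mem ha1 hb0)) (mul_mem (mul_mem ha2 hb2) c3Z)
    · exact add_mem (add_mem (mul_mem ha0 hb2) (mul_mem ha1 hb1)) (mul_mem ha2 hb0)
    · have q : ∀ w ∈ Z, ∀ t, c3 K * (w * t) = w * (c3 K * t) := by
        intro w hw t
        rw [← mul_assoc, zc w hw, mul_assoc]
      generalize c3 K = c at *
      simp only [pow_succ, pow_zero, one_mul, mul_add, add_mul, mul_assoc, zc b0 hb0, zc b1 hb1,
        zc b2 hb2, q b0 hb0, q b1 hb1, q b2 hb2]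
      abel

/-- `R′` is spanned over `A3` by `1, x_i, x_i²`. -/
noncomputable def M3 (K : Type*) [Field K] : Submodule (A3 K) (R3 K) :=
  Submodule.span (A3 K) {1, X3 K 0, X3 K 1, X3 K 2, X3 K 0 * X3 K 0, X3 K 1 * X3 K 1, X3 K 2 * X3 K 2}

lemma mem_A3 (K : Type*) [Field K] : S3 K 0 ∈ A3 K ∧ S3 K 1 ∈ A3 K ∧ S3 K 2 ∈ A3 K ∧ c3 K ∈ A3 K ∧
    d3 K ∈ A3 K := by
  refine ⟨?_, ?_, ?_, ?_, ?_⟩ <;> exact Algebra.subset_adjoin (by simp)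

lemma M3_mul_X (K : Type*) [Field K] [CharZero K] (i : Fin 3) {m : R3 K} (hm : m ∈ M3 K) :
    m * X3 K i ∈ M3 K := by
  obtain ⟨as, at', ae, ac, ad⟩ := mem_A3 K
  rw [S3_0] at as
  rw [S3_1] at at'
  rw [S3_2] at ae
  have gen : ∀ y : R3 K, y ∈ ({1, X3 K 0, X3 K 1, X3 K 2, X3 K 0 * X3 K 0, X3 K 1 * X3 K 1,
      X3 K 2 * X3 K 2} : Set (R3 K)) → y ∈ M3 K := fun _ hy => Submodule.subset_span hy
  have H := aux_closed (rels3 K) (A3 K) (M3 K).toAddSubmonoid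
    (fun a ha m hm => (M3 K).smul_mem ⟨a, ha⟩ hm) as at' ac ae ad
    (gen (1) (by simp))
    (gen (X3 K 0) (by simp))
    (gen (X3 K 1) (by simp))
    (gen (X3 K 2) (by simp))
    (gen (X3 K 0 * X3 K 0) (by simp))
    (gen (X3 K 1 * X3 K 1) (by simp))
    (gen (X3 K 2 * X3 K 2) (by simp))
  simp only [Submodule.mem_toAddSubmonoid] at H
  obtain ⟨⟨h1, h2, h3, h4, h5, h6⟩, ⟨h7, h8, h9⟩, ⟨h10, h11, h12⟩, ⟨h13, h14, h15⟩⟩ := H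
  induction hm using Submodule.span_induction with
  | mem y hy =>
    simp only [Set.mem_insert_iff, Set.mem_singleton_iff] at hy
    rcases hy with rfl | rfl | rfl | rfl | rfl | rfl | rfl
    · rw [one_mul]
      fin_cases i <;> exact Submodule.subset_span (by simp)
    · fin_cases i
      · exact Submodule.subset_span (by simp)
      · exact h1
      · exact h2
    · fin_cases i
      · exact h3
      · exact Submodule.subset_span (by simp)
      · exact h4
    · fin_cases i
      · exact h5
      · exact h6
      · exact Submodule.subset_span (by simp)
    · fin_cases i <;> assumption
    · fin_cases i <;> assumption
    · fin_cases i <;> assumption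
  | zero => rw [zero_mul]; exact zero_mem _
  | add x y _ _ hx hy => rw [add_mul]; exact add_mem hx hy
  | smul a x _ hx => rw [smul_mul_assoc]; exact (M3 K).smul_mem a hx

lemma M3_mul_mk (K : Type*) [Field K] [CharZero K] (q : P3 K) :
    ∀ m ∈ M3 K, m * mk3 K q ∈ M3 K := by
  induction q using FreeAlgebra.induction with
  | grade0 r =>
    intro m hm
    rw [AlgHom.commutes, ← Algebra.commutes]
    exact (M3 K).smul_mem (algebraMap K (A3 K) r) hm
  | grade1 i => exact fun m hm => M3_mul_X K i hm
  | mul a b ha hb =>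
    intro m hm
    rw [map_mul, ← mul_assoc]
    exact hb _ (ha _ hm)
  | add a b ha hb =>
    intro m hm
    rw [map_add, mul_add]
    exact add_mem (ha _ hm) (hb _ hm)

lemma trace_mem (K : Type*) [Field K] {m : R3 K} (hm : m ∈ M3 K) :
    m + rotR K m + rotR K (rotR K m) ∈ A3 K := by
  obtain ⟨as, at', ae, ac, ad⟩ := mem_A3 K
  have h := rels3 K
  have hsq : X3 K 0 * X3 K 0 + X3 K 1 * X3 K 1 + X3 K 2 * X3 K 2 ∈ A3 K := by
    have e : X3 K 0 * X3 K 0 + X3 K 1 * X3 K 1 + X3 K 2 * X3 K 2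
        = S3 K 0 * S3 K 0 - S3 K 1 - S3 K 1 + c3 K := by
      rw [S3_0, S3_1, c3]
      linear_combination (norm := noncomm_ring) - h.hz
    rw [e]
    exact add_mem (sub_mem (sub_mem (mul_mem as as) at') at') ac
  rw [S3_0] at as
  induction hm using Submodule.span_induction with
  | mem y hy =>
    simp only [Set.mem_insert_iff, Set.mem_singleton_iff] at hy
    rcases hy with rfl | rfl | rfl | rfl | rfl | rfl | rfl
    · simp only [map_one]
      exact add_mem (add_mem (one_mem _) (one_mem _)) (one_mem _)
    · simp only [rotR_X0, rotR_X1, rotR_X2]; convert as using 1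
    · simp only [rotR_X0, rotR_X1, rotR_X2]; convert as using 1; abel
    · simp only [rotR_X0, rotR_X1, rotR_X2]; convert as using 1; abel
    · simp only [map_mul, rotR_X0, rotR_X1, rotR_X2]; convert hsq using 1
    · simp only [map_mul, rotR_X0, rotR_X1, rotR_X2]; convert hsq using 1; abel
    · simp only [map_mul, rotR_X0, rotR_X1, rotR_X2]; convert hsq using 1; abel
  | zero => simp
  | add x y _ _ hx hy =>
    simp only [map_add]
    convert add_mem hx hy using 1
    abel
  | smul a x _ hx =>
    have e : a • x = (a : R3 K) * x := rfl
    rw [e, map_mul, map_mul, rotR_A K a.2, rotR_A K a.2, ← mul_add, ← mul_add]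
    exact mul_mem a.2 hx

/-- Every `G`-invariant element `p` of `R′` (case `n = 3`) — i.e. one such that
for every representative `q ∈ P` of `p` and every `g ∈ G` the class of `q^g` is
again `p` — has the form `p = z_0 + z_1c + z_2c²` with the `z_i` in the
`K`-subalgebra `Z_0` of `R′` generated by `σ_1, σ_2, σ_3, c³, d`. -/
theorem invariant_eq_quadratic_in_c (K : Type*) [Field K] [CharZero K]
    (p : R3 K)
    (hp : ∀ (m : ℕ) (q : P3 K), mk3 K q = p → mk3 K ((⇑(rot3 K))^[m] q) = p) :
    ∃ z0 z1 z2 : R3 K,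
      z0 ∈ Algebra.adjoin K {S3 K 0, S3 K 1, S3 K 2, (c3 K) ^ 3, d3 K} ∧
      z1 ∈ Algebra.adjoin K {S3 K 0, S3 K 1, S3 K 2, (c3 K) ^ 3, d3 K} ∧
      z2 ∈ Algebra.adjoin K {S3 K 0, S3 K 1, S3 K 2, (c3 K) ^ 3, d3 K} ∧
      p = z0 + z1 * c3 K + z2 * (c3 K) ^ 2 := by
  obtain ⟨q, rfl⟩ := RingQuot.mkAlgHom_surjective K (rel3 K) p
  change ∃ z0 z1 z2 : R3 K, _ ∧ _ ∧ _ ∧ mk3 K q = _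
  have hr : rotR K (mk3 K q) = mk3 K q := by
    rw [rotR_mk]; exact hp 1 q rfl
  have hM : mk3 K q ∈ M3 K := by
    have := M3_mul_mk K q 1 (Submodule.subset_span (by simp))
    rwa [one_mul] at this
  have ht := trace_mem K hM
  rw [hr, hr] at ht
  apply A3_form
  have e : mk3 K q = (3⁻¹ : K) • (mk3 K q + mk3 K q + mk3 K q) := by
    have e3 : mk3 K q + mk3 K q + mk3 K q = (3 : K) • mk3 K q := by
      rw [show (3 : K) = 1 + 1 + 1 by norm_num]
      simp only [add_smul, one_smul]
    rw [e3, smul_smul, inv_mul_cancel₀ three_ne_zero, one_smul]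
  rw [e]
  exact (A3 K).smul_mem ht _
end

section
/- Assume R′ is a domain. Then the center of R′ is exactly the K-subalgebra of R′ generated by σ_1, σ_2, σ_3, c³, and d. -/
open Finset

section
variable {R : Type*} [Ring R] {x y z c : R}

theorem aux_rels (h1 : x * (x+y+z) = (x+y+z)*x) (h2 : y * (x+y+z) = (x+y+z)*y)
  (k1 : x * (x*y+x*z+y*z) = (x*y+x*z+y*z)*x) (k2 : y * (x*y+x*z+y*z) = (x*y+x*z+y*z)*y)
  (hc : c = x*y - y*x) : y*z - z*y = c ∧ z*x - x*z = c ∧ x * c = c * y ∧ y * c = c * z ∧ z * c = c * x := by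
  have a1 : y*z - z*y = c := by
    rw [hc]; linear_combination (norm := noncomm_ring) h2
  have a2 : z*x - x*z = c := by
    rw [hc]; linear_combination (norm := noncomm_ring) -h1
  have b1 : y * c = c * z := by
    have : y * (z*x - x*z) = (x*y-y*x)*z := by
      have e : x*(x*y - y*x) = x * (z*x - x*z) := by rw [a2, hc]
      linear_combination (norm := noncomm_ring) -k1 + e
    rwa [a2, ← hc] at this
  have b2 : x * c = c * y := by
    have : x * (y*z-z*y) + y*(y*z-z*y) - (x*y-y*x)*y - (x*y-y*x)*z = 0 := by
      linear_combination (norm := noncomm_ring) k2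
    rw [a1, ← hc, b1] at this
    linear_combination (norm := noncomm_ring) this
  have b3 : z * c = c * x := by
    have : (x+y+z)*c = c*(x+y+z) := by
      rw [hc]
      linear_combination (norm := noncomm_ring) -h1 * y - x*h2 + h2 * x + y*h1
    linear_combination (norm := noncomm_ring) this - b1 - b2
  exact ⟨a1, a2, b2, b1, b3⟩

theorem aux_d (hc : x*y - y*x = c) (a2 : z*x - x*z = c)
   (b2 : x * c = c * y) (b1 : y * c = c * z) (b3 : z * c = c * x) :
   x * (x*y*x+y*z*y+z*x*z) = (x*y*x+y*z*y+z*x*z) * x ∧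
   c * (x*y*x+y*z*y+z*x*z) = (x*y*x+y*z*y+z*x*z) * c := by
  constructor
  · have e1 : x*(x*y-y*x)*x = c*(y*x) := by rw [hc, b2]; noncomm_ring
    have e2 : (x*y-y*x)*z*y - y * (z*x-x*z)*y = 0 := by rw [hc, a2, b1]; noncomm_ring
    have e3 : y*z*(x*y-y*x) = c * (z*x) := by
      rw [hc, mul_assoc, b3, ← mul_assoc, b1]; noncomm_ring
    have e4 : (z*x-x*z)*x*z = c*(x*z) := by rw [a2]; noncomm_ring
    have e5 : z*x*(z*x-x*z) = c*(x*y) := by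
      rw [a2, mul_assoc, b2, ← mul_assoc, b3]; noncomm_ring
    have e6 : c * (x*y-y*x) = c * (z*x-x*z) := by rw [hc, a2]
    linear_combination (norm := noncomm_ring) e1 + e2 + e3 - e4 - e5 - e6
  · have key : ∀ p q r p' q' r' : R, p*c = c*p' → q*c=c*q' → r*c=c*r' → p*q*r*c = c*(p'*q'*r') := by
      intro p q r p' q' r' h1 h2 h3
      rw [mul_assoc, h3, mul_assoc p, ← mul_assoc q, h2, ← mul_assoc, ← mul_assoc, h1]; noncomm_ring
    have e1 := key _ _ _ _ _ _ b2 b1 b2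
    have e2 := key _ _ _ _ _ _ b1 b3 b1
    have e3 := key _ _ _ _ _ _ b3 b2 b3
    linear_combination (norm := noncomm_ring) - e1 - e2 - e3

theorem aux_yz_s18 (b2 : x * c = c * y) (b1 : y * c = c * z) : c * c * z = x * (c*c) := by
  rw [mul_assoc, ← b1, ← mul_assoc, ← b2, mul_assoc]

theorem aux_c3 (b2 : x * c = c * y) (b1 : y * c = c * z) (b3 : z * c = c * x) :
    x * c^3 = c^3 * x := by
  have : x * c^3 = (x*c)*c*c := by noncomm_ring
  rw [this, b2, mul_assoc c, b1]
  have : c * (c*z) * c = c*c*(z*c) := by noncomm_ring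
  rw [this, b3]; noncomm_ring
end

section
open MvPolynomial

theorem inv_dvd {K : Type*} [Field K] (i j : Fin 3) (h : MvPolynomial (Fin 3) K)
    (h0 : rename (Function.update id i j) h = 0) : (X i - X j) ∣ h := by
  have key : ∀ p : MvPolynomial (Fin 3) K, (X i - X j) ∣ p - rename (Function.update id i j) p := by
    intro p
    induction p using MvPolynomial.induction_on with
    | C a => simp
    | add p q hp hq =>
      have := dvd_add hp hq
      rw [map_add]; convert this using 1; ring
    | mul_X p k hp =>
      rw [map_mul, rename_X]
      have h2 : (X i - X j : MvPolynomial (Fin 3) K) ∣ X k - X (Function.update id i j k) := by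
        by_cases hk : k = i
        · subst hk; simp
        · simp [Function.update_of_ne hk]
      have := dvd_add (hp.mul_right (X k)) (h2.mul_left (rename (Function.update id i j) p))
      convert this using 1; ring
  simpa [h0] using key h

theorem inv_perm (e : Equiv.Perm (Fin 3)) : 
    (⇑e = id) ∨ (⇑e = fun i => i + 1) ∨ (⇑e = (fun i => i+1) ∘ (fun i => i+1)) ∨
    (⇑e = Equiv.swap 0 1) ∨ (⇑e = (fun i => i+1) ∘ (Equiv.swap 0 1)) ∨
    (⇑e = (fun i => i+1) ∘ (fun i => i+1) ∘ (Equiv.swap 0 1)) := by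
  revert e; decide

theorem inv_symm {K : Type*} [Field K] (f : MvPolynomial (Fin 3) K)
    (h1 : rename (fun i => i + 1) f = f) (h2 : rename (Equiv.swap (0 : Fin 3) 1) f = f) :
    f ∈ Algebra.adjoin K {(X 0 + X 1 + X 2 : MvPolynomial (Fin 3) K),
      X 0 * X 1 + X 0 * X 2 + X 1 * X 2, X 0 * X 1 * X 2} := by
  have hs : f.IsSymmetric := by
    intro e
    rcases inv_perm e with h | h | h | h | h | h <;> rw [h] <;>
      simp only [rename_id, AlgHom.id_apply, ← rename_rename, ← Function.comp_assoc, h1, h2]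
  obtain ⟨p, hp⟩ := esymmAlgHom_surjective (σ := Fin 3) (R := K) (n := 3) (by simp) ⟨f, hs⟩
  have hp' := congrArg Subtype.val hp
  rw [esymmAlgHom_apply] at hp'
  simp only at hp'
  rw [← hp']
  have hm : aeval (fun i : Fin 3 => esymm (Fin 3) K (i + 1)) p ∈
      Algebra.adjoin K (Set.range (fun i : Fin 3 => esymm (Fin 3) K (i + 1))) := by
    rw [Algebra.adjoin_range_eq_range_aeval]; exact ⟨p, rfl⟩
  refine Algebra.adjoin_le ?_ hm
  rintro _ ⟨i, rfl⟩
  apply Algebra.subset_adjoin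
  fin_cases i
  · left
    simp [esymm_one, Fin.sum_univ_three]
  · right; left
    have : Finset.powersetCard 2 (univ : Finset (Fin 3)) = {{0,1},{0,2},{1,2}} := by decide
    simp only [esymm]
    show ∑ t ∈ powersetCard 2 univ, ∏ i ∈ t, X i = _
    rw [this, Finset.sum_insert (by decide), Finset.sum_insert (by decide), Finset.sum_singleton,
      Finset.prod_pair (by decide), Finset.prod_pair (by decide), Finset.prod_pair (by decide)]
    ring
  · right; right
    have : Finset.powersetCard 3 (univ : Finset (Fin 3)) = {univ} := by decide
    simp only [esymm]
    show ∑ t ∈ powersetCard 3 univ, ∏ i ∈ t, X i = _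
    rw [this, Finset.sum_singleton, Fin.prod_univ_three]

theorem inv_main {K : Type*} [Field K] [CharZero K] (f : MvPolynomial (Fin 3) K)
    (h1 : rename (fun i => i + 1) f = f) :
    f ∈ Algebra.adjoin K {(X 0 + X 1 + X 2 : MvPolynomial (Fin 3) K),
      X 0 * X 1 + X 0 * X 2 + X 1 * X 2, X 0 * X 1 * X 2,
      X 0 * X 1 * X 0 + X 1 * X 2 * X 1 + X 2 * X 0 * X 2} := by
  set A := Algebra.adjoin K {(X 0 + X 1 + X 2 : MvPolynomial (Fin 3) K),
      X 0 * X 1 + X 0 * X 2 + X 1 * X 2, X 0 * X 1 * X 2,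
      X 0 * X 1 * X 0 + X 1 * X 2 * X 1 + X 2 * X 0 * X 2} with hA
  have hsub : Algebra.adjoin K {(X 0 + X 1 + X 2 : MvPolynomial (Fin 3) K),
      X 0 * X 1 + X 0 * X 2 + X 1 * X 2, X 0 * X 1 * X 2} ≤ A := by
    apply Algebra.adjoin_mono
    intro t ht
    rcases ht with h | h | h
    · left; exact h
    · right; left; exact h
    · right; right; left; exact h
  have hcc : ∀ p : MvPolynomial (Fin 3) K, rename (fun i => i + 1) (rename (Equiv.swap (0 : Fin 3) 1) p)
      = rename (Equiv.swap (0 : Fin 3) 1) (rename (fun i => i+1) (rename (fun i => i + 1) p)) := by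
    intro p
    simp only [rename_rename]
    congr 2
    decide
  have hss : ∀ p : MvPolynomial (Fin 3) K, rename (Equiv.swap (0 : Fin 3) 1)
      (rename (Equiv.swap (0 : Fin 3) 1) p) = p := by
    intro p
    rw [rename_rename]
    have : (⇑(Equiv.swap (0 : Fin 3) 1) ∘ ⇑(Equiv.swap (0 : Fin 3) 1)) = id := by decide
    rw [this, rename_id_apply]
  set sf := rename (Equiv.swap (0 : Fin 3) 1) f with hsf
  have hsf1 : rename (fun i => i + 1) sf = sf := by rw [hsf, hcc, h1, h1]
  have hsf2 : rename (Equiv.swap (0 : Fin 3) 1) sf = f := hss f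
  have hp : f + sf ∈ A := hsub (inv_symm _ (by rw [map_add, h1, hsf1])
    (by rw [map_add, hsf2, ← hsf, add_comm]))
  -- the antisymmetric part
  set g := f - sf with hg
  have hg1 : rename (fun i => i + 1) g = g := by rw [hg, map_sub, h1, hsf1]
  have hg2 : rename (Equiv.swap (0 : Fin 3) 1) g = -g := by
    rw [hg, map_sub, hsf2, ← hsf]; ring
  have half : ∀ p : MvPolynomial (Fin 3) K, p = - p → p = 0 := fun p hp => by
    have : (2 : MvPolynomial (Fin 3) K) * p = 0 := by linear_combination hp
    simpa using this
  have v01 : rename (Function.update id (0 : Fin 3) 1) g = 0 := by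
    apply half
    rw [← map_neg, ← hg2, rename_rename]
    congr 2
    decide
  have v12 : rename (Function.update id (1 : Fin 3) 2) g = 0 := by
    have := congrArg (rename (fun i : Fin 3 => i + 1)) v01
    rw [rename_rename, map_zero] at this
    rw [← this]
    conv_lhs => rw [← hg1]
    rw [rename_rename]
    congr 2
    decide
  have v02 : rename (Function.update id (0 : Fin 3) 2) g = 0 := by
    have hg3 : rename (Equiv.swap (0 : Fin 3) 2) g = -g := by
      rw [← hg2]
      conv_rhs => rw [← hg1]
      rw [rename_rename]
      conv_lhs => rw [← hg1, ← hg1]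
      rw [rename_rename, rename_rename]
      congr 2
      decide
    apply half
    rw [← map_neg, ← hg3, rename_rename]
    congr 2
    decide
  have hX : ∀ i j : Fin 3, i ≠ j → (X i - X j : MvPolynomial (Fin 3) K) ≠ 0 := by
    intro i j hij h
    exact hij (X_injective (sub_eq_zero.mp h))
  obtain ⟨g1, e1⟩ := inv_dvd 0 1 g v01
  have w12 : rename (Function.update id (1 : Fin 3) 2) g1 = 0 := by
    rw [e1, map_mul, map_sub, rename_X, rename_X] at v12
    exact (mul_eq_zero.mp v12).resolve_left (hX _ _ (by decide))
  obtain ⟨g2, e2⟩ := inv_dvd 1 2 g1 w12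
  have w02 : rename (Function.update id (0 : Fin 3) 2) g2 = 0 := by
    rw [e1, e2, map_mul, map_sub, rename_X, rename_X, map_mul, map_sub, rename_X, rename_X] at v02
    exact (mul_eq_zero.mp ((mul_eq_zero.mp v02).resolve_left (hX _ _ (by decide)))).resolve_left
      (hX _ _ (by decide))
  obtain ⟨h, e3⟩ := inv_dvd 0 2 g2 w02
  have hgh : g = (X 0 - X 1) * (X 1 - X 2) * (X 0 - X 2) * h := by
    rw [e1, e2, e3]; ring
  have hne : ((X 0 - X 1) * (X 1 - X 2) * (X 0 - X 2) : MvPolynomial (Fin 3) K) ≠ 0 :=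
    mul_ne_zero (mul_ne_zero (hX _ _ (by decide)) (hX _ _ (by decide))) (hX _ _ (by decide))
  have hh : h ∈ A := by
    apply hsub
    apply inv_symm
    · apply mul_left_cancel₀ hne
      rw [← hgh, ← hg1]
      conv_rhs => rw [hgh]
      simp only [map_mul, map_sub, rename_X]
      have a0 : (0 : Fin 3) + 1 = 1 := by decide
      have a1 : (1 : Fin 3) + 1 = 2 := by decide
      have a2 : (2 : Fin 3) + 1 = 0 := by decide
      rw [a0, a1, a2]; ring
    · apply mul_left_cancel₀ hne
      have := hg2
      rw [← neg_eq_iff_eq_neg] at this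
      rw [← hgh, ← this]
      conv_rhs => rw [hgh]
      simp only [map_mul, map_sub, rename_X, Equiv.swap_apply_left, Equiv.swap_apply_right]
      have a2 : Equiv.swap (0 : Fin 3) 1 2 = 2 := by decide
      rw [a2]; ring
  have m1 : (X 0 + X 1 + X 2 : MvPolynomial (Fin 3) K) ∈ A := Algebra.subset_adjoin (by simp)
  have m2 : (X 0 * X 1 + X 0 * X 2 + X 1 * X 2 : MvPolynomial (Fin 3) K) ∈ A :=
    Algebra.subset_adjoin (by simp)
  have m3 : (X 0 * X 1 * X 2 : MvPolynomial (Fin 3) K) ∈ A := Algebra.subset_adjoin (by simp)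
  have m4 : (X 0 * X 1 * X 0 + X 1 * X 2 * X 1 + X 2 * X 0 * X 2 : MvPolynomial (Fin 3) K) ∈ A :=
    Algebra.subset_adjoin (by simp)
  have hd : ((X 0 - X 1) * (X 1 - X 2) * (X 0 - X 2) : MvPolynomial (Fin 3) K) ∈ A := by
    have := A.sub_mem (A.smul_mem m4 2) (A.sub_mem (A.mul_mem m1 m2) (A.smul_mem m3 3))
    convert this using 1
    simp only [Algebra.smul_def, map_ofNat]
    ring
  have h2f : f + sf + g ∈ A := A.add_mem hp (hgh ▸ A.mul_mem hd hh)
  have := A.smul_mem h2f (2⁻¹ : K)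
  convert this using 1
  rw [hg, show f + sf + (f - sf) = (2 : K) • f by rw [two_smul]; ring, smul_smul]
  simp

end

section

theorem R3_induction {K : Type*} [Field K] {p : R3 K → Prop}
    (h0 : ∀ r, p (algebraMap K (R3 K) r)) (h1 : ∀ i, p (X3 K i))
    (hm : ∀ a b, p a → p b → p (a * b)) (ha : ∀ a b, p a → p b → p (a + b)) (a : R3 K) : p a := by
  obtain ⟨a, rfl⟩ := RingQuot.mkAlgHom_surjective K (rel3 K) a
  change p (mk3 K a)
  induction a using FreeAlgebra.induction with
  | grade0 r => rw [AlgHom.commutes]; exact h0 r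
  | grade1 x => exact h1 x
  | mul a b ha' hb' => rw [map_mul]; exact hm _ _ ha' hb'
  | add a b ha' hb' => rw [map_add]; exact ha _ _ ha' hb'

theorem R3_comm {K : Type*} [Field K] (i k : Fin 3) : X3 K i * S3 K k = S3 K k * X3 K i := by
  have := RingQuot.mkAlgHom_rel K (s := rel3 K) (x := x3 K i * sig3 K k) (y := sig3 K k * x3 K i)
    ⟨i, k, rfl, rfl⟩
  rw [map_mul, map_mul] at this
  exact this

theorem S3_zero {K : Type*} [Field K] : S3 K 0 = X3 K 0 + X3 K 1 + X3 K 2 := by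
  simp [S3, sig3, X3]
theorem S3_one {K : Type*} [Field K] :
    S3 K 1 = X3 K 0 * X3 K 1 + X3 K 0 * X3 K 2 + X3 K 1 * X3 K 2 := by
  simp [S3, sig3, X3]
theorem S3_two {K : Type*} [Field K] : S3 K 2 = X3 K 0 * X3 K 1 * X3 K 2 := by
  simp [S3, sig3, X3]

/-- lifting maps out of the quotient ring -/
theorem R3_lift {K : Type*} [Field K] {B : Type*} [Semiring B] [Algebra K B] (v : Fin 3 → B)
    (h1 : ∀ i, v i * (v 0 + v 1 + v 2) = (v 0 + v 1 + v 2) * v i)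
    (h2 : ∀ i, v i * (v 0 * v 1 + v 0 * v 2 + v 1 * v 2) =
      (v 0 * v 1 + v 0 * v 2 + v 1 * v 2) * v i)
    (h3 : ∀ i, v i * (v 0 * v 1 * v 2) = (v 0 * v 1 * v 2) * v i) :
    ∃ F : R3 K →ₐ[K] B, ∀ i, F (X3 K i) = v i := by
  refine ⟨RingQuot.liftAlgHom K ⟨FreeAlgebra.lift K v, ?_⟩, ?_⟩
  · rintro _ _ ⟨i, k, rfl, rfl⟩
    fin_cases k
    · simpa [x3, sig3] using h1 i
    · simpa [x3, sig3] using h2 i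
    · simpa [x3, sig3] using h3 i
  · intro i
    rw [X3, mk3, RingQuot.liftAlgHom_mkAlgHom_apply]
    simp [x3]

theorem c3_ne_zero {K : Type*} [Field K] : c3 K ≠ 0 := by
  let v : Fin 3 → Matrix (Fin 2) (Fin 2) K := ![!![0,1;0,1], !![0,-1;0,0], !![1,0;0,0]]
  obtain ⟨F, hF⟩ := R3_lift (K := K) v
    (by intro i; ext k l; fin_cases i <;> fin_cases k <;> fin_cases l <;> simp [v])
    (by intro i; ext k l; fin_cases i <;> fin_cases k <;> fin_cases l <;> simp [v])
    (by intro i; ext k l; fin_cases i <;> fin_cases k <;> fin_cases l <;> simp [v])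
  intro h
  have := congrArg F h
  rw [c3, map_sub, map_mul, map_mul, hF, hF, map_zero] at this
  have := congrFun (congrFun this 0) 1
  simp [v] at this

theorem R3_rels {K : Type*} [Field K] :
    X3 K 1 * X3 K 2 - X3 K 2 * X3 K 1 = c3 K ∧ X3 K 2 * X3 K 0 - X3 K 0 * X3 K 2 = c3 K ∧
    X3 K 0 * c3 K = c3 K * X3 K 1 ∧ X3 K 1 * c3 K = c3 K * X3 K 2 ∧
    X3 K 2 * c3 K = c3 K * X3 K 0 := by
  have h := R3_comm (K := K)
  apply aux_rels
  · rw [← S3_zero]; exact h _ _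
  · rw [← S3_zero]; exact h _ _
  · rw [← S3_one]; exact h _ _
  · rw [← S3_one]; exact h _ _
  · rfl

theorem R3_rel_succ {K : Type*} [Field K] (i : Fin 3) : X3 K i * c3 K = c3 K * X3 K (i + 1) := by
  obtain ⟨-, -, h0, h1, h2⟩ := R3_rels (K := K)
  fin_cases i
  · exact h0
  · exact h1
  · exact h2

theorem mem_center_of {K : Type*} [Field K] (a : R3 K) (h : ∀ i, X3 K i * a = a * X3 K i) :
    a ∈ Subalgebra.center K (R3 K) := by
  rw [Subalgebra.mem_center_iff]
  intro b
  induction b using R3_induction with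
  | h0 r => exact Algebra.commutes r a
  | h1 i => exact h i
  | hm b b' hb hb' => rw [mul_assoc, hb', ← mul_assoc, hb, mul_assoc]
  | ha b b' hb hb' => rw [add_mul, mul_add, hb, hb']

theorem R3_pi (K : Type*) [Field K] :
    ∃ F : R3 K →ₐ[K] MvPolynomial (Fin 3) K, ∀ i, F (X3 K i) = MvPolynomial.X i :=
  R3_lift _ (fun _ => mul_comm _ _) (fun _ => mul_comm _ _) (fun _ => mul_comm _ _)

theorem R3_swap {K : Type*} [Field K] (F : R3 K →ₐ[K] MvPolynomial (Fin 3) K)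
    (hF : ∀ i, F (X3 K i) = MvPolynomial.X i) (a : R3 K) :
    ∃ b, a * c3 K = c3 K * b ∧ F b = MvPolynomial.rename (fun i => i + 1) (F a) := by
  induction a using R3_induction with
  | h0 r => exact ⟨algebraMap K _ r, Algebra.commutes _ _, by simp [AlgHom.commutes]⟩
  | h1 i => exact ⟨X3 K (i+1), R3_rel_succ i, by simp [hF]⟩
  | hm a a' h h' =>
    obtain ⟨b, h1, h2⟩ := h
    obtain ⟨b', h1', h2'⟩ := h'
    exact ⟨b * b', by rw [mul_assoc, h1', ← mul_assoc, h1, mul_assoc], by simp [h2, h2']⟩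
  | ha a a' h h' =>
    obtain ⟨b, h1, h2⟩ := h
    obtain ⟨b', h1', h2'⟩ := h'
    exact ⟨b + b', by rw [add_mul, h1, h1', mul_add], by simp [h2, h2']⟩

theorem R3_swap' {K : Type*} [Field K] (b : R3 K) : ∃ a, c3 K * b = a * c3 K := by
  induction b using R3_induction with
  | h0 r => exact ⟨algebraMap K _ r, (Algebra.commutes _ _).symm⟩
  | h1 i => exact ⟨X3 K (i+2), by rw [R3_rel_succ, add_assoc]; congr 2; fin_cases i <;> rfl⟩
  | hm a a' h h' =>
    obtain ⟨b, h⟩ := h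
    obtain ⟨b', h'⟩ := h'
    exact ⟨b * b', by rw [← mul_assoc, h, mul_assoc, h', mul_assoc]⟩
  | ha a a' h h' =>
    obtain ⟨b, h⟩ := h
    obtain ⟨b', h'⟩ := h'
    exact ⟨b + b', by rw [mul_add, h, h', add_mul]⟩

theorem R3_ker {K : Type*} [Field K] (F : R3 K →ₐ[K] MvPolynomial (Fin 3) K)
    (hF : ∀ i, F (X3 K i) = MvPolynomial.X i) (a : R3 K) (ha : F a = 0) :
    ∃ r, a = r * c3 K := by
  let I : Ideal (R3 K) := Ideal.span {c3 K}
  have htwo : I.IsTwoSided := by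
    refine ⟨fun {a} b hab => ?_⟩
    obtain ⟨r, rfl⟩ := Ideal.mem_span_singleton'.mp hab
    obtain ⟨b', hb'⟩ := R3_swap' b
    rw [mul_assoc, hb', ← mul_assoc]
    exact Ideal.mem_span_singleton'.mpr ⟨_, rfl⟩
  have hc0 : Ideal.Quotient.mk I (c3 K) = 0 :=
    Ideal.Quotient.eq_zero_iff_mem.mpr (Ideal.mem_span_singleton_self _)
  have hXX : ∀ i j, Ideal.Quotient.mk I (X3 K i * X3 K j) =
      Ideal.Quotient.mk I (X3 K j * X3 K i) := by
    obtain ⟨h12, h20, -⟩ := R3_rels (K := K)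
    have q01 : Ideal.Quotient.mk I (X3 K 0 * X3 K 1) = Ideal.Quotient.mk I (X3 K 1 * X3 K 0) := by
      rw [← sub_eq_zero, ← map_sub]; exact hc0
    have q12 : Ideal.Quotient.mk I (X3 K 1 * X3 K 2) = Ideal.Quotient.mk I (X3 K 2 * X3 K 1) := by
      rw [← sub_eq_zero, ← map_sub, h12]; exact hc0
    have q20 : Ideal.Quotient.mk I (X3 K 2 * X3 K 0) = Ideal.Quotient.mk I (X3 K 0 * X3 K 2) := by
      rw [← sub_eq_zero, ← map_sub, h20]; exact hc0
    intro i j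
    fin_cases i <;> fin_cases j
    · rfl
    · exact q01
    · exact q20.symm
    · exact q01.symm
    · rfl
    · exact q12
    · exact q20
    · exact q12.symm
    · rfl
  have hcomm1 : ∀ i a, Ideal.Quotient.mk I (X3 K i * a) = Ideal.Quotient.mk I (a * X3 K i) := by
    intro i a
    induction a using R3_induction with
    | h0 r => rw [Algebra.commutes]
    | h1 j => exact hXX i j
    | hm b b' hb hb' =>
      rw [map_mul] at hb hb' ⊢
      rw [map_mul, map_mul, map_mul] at *
      rw [← mul_assoc, hb, mul_assoc, hb', mul_assoc]
    | ha b b' hb hb' => rw [mul_add, add_mul, map_add, map_add, hb, hb']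
  have hcomm : ∀ b a, Ideal.Quotient.mk I (b * a) = Ideal.Quotient.mk I (a * b) := by
    intro b a
    induction b using R3_induction with
    | h0 r => rw [Algebra.commutes]
    | h1 j => exact hcomm1 j a
    | hm b b' hb hb' =>
      rw [map_mul, map_mul] at *
      rw [map_mul, map_mul, mul_assoc, hb', ← mul_assoc, hb, mul_assoc]
    | ha b b' hb hb' => rw [mul_add, add_mul, map_add, map_add, hb, hb']
  let _ : CommRing (R3 K ⧸ I) :=
    { (inferInstance : Ring (R3 K ⧸ I)) with
      mul_comm := by
        intro a b
        obtain ⟨a, rfl⟩ := Ideal.Quotient.mk_surjective a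
        obtain ⟨b, rfl⟩ := Ideal.Quotient.mk_surjective b
        have := hcomm a b
        rwa [map_mul, map_mul] at this }
  let G : MvPolynomial (Fin 3) K →ₐ[K] (R3 K ⧸ I) :=
    MvPolynomial.aeval (fun i => Ideal.Quotient.mk I (X3 K i))
  have hG : ∀ a, G (F a) = Ideal.Quotient.mk I a := by
    intro a
    induction a using R3_induction with
    | h0 r => rw [AlgHom.commutes, AlgHom.commutes]; rfl
    | h1 i => rw [hF, MvPolynomial.aeval_X]
    | hm b b' hb hb' => rw [map_mul, map_mul, hb, hb', map_mul]
    | ha b b' hb hb' => rw [map_add, map_add, hb, hb', map_add]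
  have h0 : Ideal.Quotient.mk I a = 0 := by rw [← hG, ha, map_zero]
  obtain ⟨r, hr⟩ := Ideal.mem_span_singleton'.mp (Ideal.Quotient.eq_zero_iff_mem.mp h0)
  exact ⟨r, hr.symm⟩

open Polynomial in
theorem R3_grade (K : Type*) [Field K] :
    ∃ F : R3 K →ₐ[K] (R3 K)[X], ∀ i, F (X3 K i) = monomial 1 (X3 K i) := by
  have h := R3_comm (K := K)
  apply R3_lift
  · intro i
    have := h i 0
    rw [S3_zero] at this
    simp only [← map_add, monomial_mul_monomial, this]
  · intro i
    have := h i 1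
    rw [S3_one] at this
    simp only [← map_add, monomial_mul_monomial, this]
  · intro i
    have := h i 2
    rw [S3_two] at this
    simp only [monomial_mul_monomial, this]

open Polynomial in
theorem R3_grade_idem {K : Type*} [Field K] (F : R3 K →ₐ[K] (R3 K)[X])
    (hF : ∀ i, F (X3 K i) = monomial 1 (X3 K i)) (a : R3 K) :
    ∀ n, F ((F a).coeff n) = monomial n ((F a).coeff n) := by
  induction a using R3_induction with
  | h0 r =>
    intro n
    rw [AlgHom.commutes, Polynomial.algebraMap_apply, coeff_C]
    split_ifs with hn
    · subst hn; rw [AlgHom.commutes, Polynomial.algebraMap_apply]; rfl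
    · simp
  | h1 i =>
    intro n
    rw [hF, coeff_monomial]
    split_ifs with hn
    · subst hn; exact hF i
    · simp
  | hm a b ha hb =>
    intro n
    rw [map_mul, coeff_mul, map_sum, map_sum]
    refine Finset.sum_congr rfl fun p hp => ?_
    rw [map_mul, ha, hb, monomial_mul_monomial, Finset.HasAntidiagonal.mem_antidiagonal.mp hp]
  | ha a b ha hb =>
    intro n
    rw [map_add, coeff_add, map_add, ha, hb, map_add]

open Polynomial in
theorem R3_grade_sum {K : Type*} [Field K] (F : R3 K →ₐ[K] (R3 K)[X])
    (hF : ∀ i, F (X3 K i) = monomial 1 (X3 K i)) (a : R3 K) :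
    a = (F a).sum (fun _ b => b) := by
  have : ∀ p : (R3 K)[X], p.sum (fun _ b => b) = eval₂RingHom' (RingHom.id _) 1
      (fun a => Commute.one_right a) p := by
    intro p
    change _ = eval₂ _ _ _
    simp [eval₂_eq_sum]
  rw [this]
  induction a using R3_induction with
  | h0 r =>
    rw [AlgHom.commutes, Polynomial.algebraMap_apply]
    change _ = eval₂ _ _ _
    rw [eval₂_C]; rfl
  | h1 i =>
    rw [hF]
    change _ = eval₂ _ _ _
    simp
  | hm a b ha hb => rw [map_mul, map_mul, ← ha, ← hb]
  | ha a b ha hb => rw [map_add, map_add, ← ha, ← hb]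

end

theorem center_eq_adjoin_of_domain (K : Type*) [Field K] [CharZero K]
    (hdom : IsDomain (R3 K)) :
    Subalgebra.center K (R3 K) =
      Algebra.adjoin K {S3 K 0, S3 K 1, S3 K 2, (c3 K) ^ 3, d3 K} := by
  obtain ⟨h12, h20, b0, b1, b2⟩ := R3_rels (K := K)
  have hc := c3_ne_zero (K := K)
  have h01 : X3 K 0 * X3 K 1 - X3 K 1 * X3 K 0 = c3 K := rfl
  obtain ⟨hd0, hdc⟩ := aux_d h01 h20 b0 b1 b2
  change X3 K 0 * d3 K = d3 K * X3 K 0 at hd0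
  change c3 K * d3 K = d3 K * c3 K at hdc
  have hdstep : ∀ i, X3 K i * d3 K = d3 K * X3 K i →
      X3 K (i+1) * d3 K = d3 K * X3 K (i+1) := by
    intro i hi
    apply mul_left_cancel₀ hc
    rw [← mul_assoc, ← R3_rel_succ, mul_assoc, hdc, ← mul_assoc, hi, mul_assoc, R3_rel_succ,
      ← mul_assoc, ← hdc, mul_assoc]
  have hd1 := hdstep 0 hd0
  have hd2 := hdstep 1 hd1
  have hC3 : c3 K ^ 3 ∈ Subalgebra.center K (R3 K) := by
    apply mem_center_of
    intro i
    fin_cases i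
    · exact aux_c3 b0 b1 b2
    · exact aux_c3 b1 b2 b0
    · exact aux_c3 b2 b0 b1
  have hle : Algebra.adjoin K {S3 K 0, S3 K 1, S3 K 2, (c3 K) ^ 3, d3 K} ≤
      Subalgebra.center K (R3 K) := by
    apply Algebra.adjoin_le
    rintro _ (rfl | rfl | rfl | rfl | rfl)
    · exact mem_center_of _ fun i => R3_comm i 0
    · exact mem_center_of _ fun i => R3_comm i 1
    · exact mem_center_of _ fun i => R3_comm i 2
    · exact hC3
    · refine mem_center_of _ fun i => ?_
      fin_cases i
      · exact hd0
      · exact hd1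
      · exact hd2
  refine le_antisymm ?_ hle
  set A := Algebra.adjoin K {S3 K 0, S3 K 1, S3 K 2, (c3 K) ^ 3, d3 K} with hA
  have mS : ∀ k, S3 K k ∈ A := by
    intro k; apply Algebra.subset_adjoin; fin_cases k <;> simp
  have mc : c3 K ^ 3 ∈ A := Algebra.subset_adjoin (by simp)
  have md : d3 K ∈ A := Algebra.subset_adjoin (by simp)
  obtain ⟨π, hπ⟩ := R3_pi K
  obtain ⟨φ, hφ⟩ := R3_grade K
  have hφc : φ (c3 K) = Polynomial.monomial 2 (c3 K) := by
    simp only [c3, map_sub, map_mul, hφ, Polynomial.monomial_mul_monomial]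
  -- components of elements of A are in A
  have hAcomp : ∀ u ∈ A, ∀ n, (φ u).coeff n ∈ A := by
    have hmono : ∀ m (s : R3 K), s ∈ A → ∀ n, (Polynomial.monomial m s).coeff n ∈ A := by
      intro m s hs n
      rw [Polynomial.coeff_monomial]
      split_ifs
      · exact hs
      · exact A.zero_mem
    intro u hu
    rw [hA] at hu
    induction hu using Algebra.adjoin_induction with
    | mem x hx =>
      rcases hx with rfl | rfl | rfl | rfl | rfl
      · have : φ (S3 K 0) = Polynomial.monomial 1 (S3 K 0) := by
          simp only [S3_zero, map_add, hφ]
        rw [this]; exact hmono _ _ (mS 0)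
      · have : φ (S3 K 1) = Polynomial.monomial 2 (S3 K 1) := by
          simp only [S3_one, map_add, map_mul, hφ, Polynomial.monomial_mul_monomial]
        rw [this]; exact hmono _ _ (mS 1)
      · have : φ (S3 K 2) = Polynomial.monomial 3 (S3 K 2) := by
          simp only [S3_two, map_mul, hφ, Polynomial.monomial_mul_monomial]
        rw [this]; exact hmono _ _ (mS 2)
      · rw [map_pow, hφc, Polynomial.monomial_pow]; exact hmono _ _ mc
      · have : φ (d3 K) = Polynomial.monomial 3 (d3 K) := by
          simp only [d3, map_add, map_mul, hφ, Polynomial.monomial_mul_monomial]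
        rw [this]; exact hmono _ _ md
    | algebraMap r =>
      rw [AlgHom.commutes, Polynomial.algebraMap_apply]
      exact hmono 0 _ (A.algebraMap_mem r)
    | add a b _ _ ha hb =>
      intro n; rw [map_add, Polynomial.coeff_add]; exact A.add_mem (ha n) (hb n)
    | mul a b _ _ ha hb =>
      intro n
      rw [map_mul, Polynomial.coeff_mul]
      exact A.sum_mem fun p _ => A.mul_mem (ha _) (hb _)
  -- leading forms
  have hlead : ∀ a ∈ Subalgebra.center K (R3 K), ∃ u ∈ A, π u = π a := by
    intro a ha
    rw [Subalgebra.mem_center_iff] at ha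
    obtain ⟨b, hb1, hb2⟩ := R3_swap π hπ a
    have hab : a = b := mul_left_cancel₀ hc ((ha _).trans hb1)
    rw [← hab] at hb2
    have hm := inv_main (π a) hb2.symm
    have hmap : Algebra.adjoin K {(MvPolynomial.X 0 + MvPolynomial.X 1 + MvPolynomial.X 2 : MvPolynomial (Fin 3) K),
      MvPolynomial.X 0 * MvPolynomial.X 1 + MvPolynomial.X 0 * MvPolynomial.X 2 + MvPolynomial.X 1 * MvPolynomial.X 2,
      MvPolynomial.X 0 * MvPolynomial.X 1 * MvPolynomial.X 2,
      MvPolynomial.X 0 * MvPolynomial.X 1 * MvPolynomial.X 0 + MvPolynomial.X 1 * MvPolynomial.X 2 * MvPolynomial.X 1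
        + MvPolynomial.X 2 * MvPolynomial.X 0 * MvPolynomial.X 2} ≤ A.map π := by
      apply Algebra.adjoin_le
      rintro _ (rfl | rfl | rfl | rfl)
      · exact ⟨S3 K 0, mS 0, by simp [S3_zero, hπ]⟩
      · exact ⟨S3 K 1, mS 1, by simp [S3_one, hπ]⟩
      · exact ⟨S3 K 2, mS 2, by simp [S3_two, hπ]⟩
      · exact ⟨d3 K, md, by simp [d3, hπ]⟩
    obtain ⟨u, hu, huu⟩ := hmap hm
    exact ⟨u, hu, huu⟩
  -- descent
  have hdesc : ∀ b ∈ Subalgebra.center K (R3 K), π b = 0 → ∃ r, b = r * c3 K ^ 3 := by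
    intro b hb hb0
    rw [Subalgebra.mem_center_iff] at hb
    have hXne : ∀ i j : Fin 3, i ≠ j → (MvPolynomial.X i : MvPolynomial (Fin 3) K) ≠ MvPolynomial.X j :=
      fun i j hij h => hij (MvPolynomial.X_injective h)
    have hz : ∀ (r : R3 K) (i j : Fin 3), i ≠ j → r * X3 K i = X3 K j * r → π r = 0 := by
      intro r i j hij h
      have := congrArg π h
      rw [map_mul, map_mul, hπ, hπ] at this
      by_contra hne
      rw [mul_comm] at this
      exact hXne i j hij (mul_right_cancel₀ hne this)
    obtain ⟨r, hr⟩ := R3_ker π hπ b hb0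
    have hr0 : π r = 0 := by
      apply hz r 0 1 (by decide)
      apply mul_right_cancel₀ hc
      have := hb (X3 K 1)
      rw [hr] at this
      rw [mul_assoc, b0, ← mul_assoc, ← this, mul_assoc]
    obtain ⟨r1, hr1⟩ := R3_ker π hπ r hr0
    have hr10 : π r1 = 0 := by
      apply hz r1 0 2 (by decide)
      apply mul_right_cancel₀ (mul_ne_zero hc hc)
      have := hb (X3 K 2)
      rw [hr, hr1, mul_assoc r1] at this
      rw [mul_assoc, ← aux_yz_s18 b0 b1, ← mul_assoc, ← this, mul_assoc]
    obtain ⟨r2, hr2⟩ := R3_ker π hπ r1 hr10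
    exact ⟨r2, by rw [hr, hr1, hr2]; noncomm_ring⟩
  have hcanc : ∀ r, r * c3 K ^ 3 ∈ Subalgebra.center K (R3 K) →
      r ∈ Subalgebra.center K (R3 K) := by
    intro r hr
    rw [Subalgebra.mem_center_iff] at hr hC3 ⊢
    intro b
    apply mul_right_cancel₀ (pow_ne_zero 3 hc)
    rw [mul_assoc, hr, mul_assoc, mul_assoc, hC3]
  -- homogeneous central elements
  have hhom : ∀ n, ∀ a ∈ Subalgebra.center K (R3 K), φ a = Polynomial.monomial n a → a ∈ A := by
    intro n
    induction n using Nat.strong_induction_on with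
    | _ n ih =>
      intro a ha hn
      obtain ⟨u, hu, hua⟩ := hlead a ha
      obtain ⟨r, hr⟩ := hdesc (a - u) (Subalgebra.sub_mem _ ha (hle hu)) (by rw [map_sub, hua, sub_self])
      have h1 := congrArg (fun t => (φ t).coeff n) hr
      simp only [map_sub, map_mul, map_pow, hφc, Polynomial.monomial_pow, hn,
        Polynomial.coeff_sub, Polynomial.coeff_monomial_same] at h1
      have hun := hAcomp u hu n
      rw [← Polynomial.C_mul_X_pow_eq_monomial, ← mul_assoc, Polynomial.coeff_mul_X_pow'] at h1
      split_ifs at h1 with h6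
      · rw [Polynomial.coeff_mul_C] at h1
        have hz : (φ r).coeff (n - 2 * 3) ∈ A := by
          apply ih (n - 2 * 3) (by omega)
          · apply hcanc
            rw [← h1]
            exact Subalgebra.sub_mem _ ha (hle hun)
          · exact R3_grade_idem φ hφ r _
        rw [sub_eq_iff_eq_add.mp h1]
        exact A.add_mem (A.mul_mem hz mc) hun
      · rw [sub_eq_zero.mp h1]; exact hun
  intro a ha
  rw [R3_grade_sum φ hφ a, Polynomial.sum]
  refine A.sum_mem fun n _ => hhom n _ ?_ (R3_grade_idem φ hφ a n)
  apply mem_center_of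
  intro i
  rw [Subalgebra.mem_center_iff] at ha
  have h1 := congrArg (fun t => (φ t).coeff (n + 1)) (ha (X3 K i))
  simp only [map_mul, hφ] at h1
  rwa [Polynomial.coeff_monomial_mul, Polynomial.coeff_mul_monomial] at h1
end
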